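/- There exists a constant C ≥ 1 such that for all a ≥ 0 and all w ∈ ℝ: (1/C) e^{−C a²} ≤ (1 + 2a H(w))² + 2π a² w² e^{−w²} ≤ C (1 + a²). In particular, the squared modulus of the Lenard–Balescu dispersion function at the Maxwellian, which equals (1 + 2 Ṽ H(w))² + 2π Ṽ² w² e^{−w²} with Ṽ = V̂(k) ≥ 0 and w = √2 (k·v)/|k|, is bounded above and below away from 0 uniformly in k and v whenever V̂ is bounded. -/

import Mathlib

/-!
The integral `∫_0^x e^{y²/2} dy` is compared with `g(x) e^{x²/2}`, where
`g(x) = x (x² + 17) / (x⁴ + 5x² + 10)` is a supersolution of the equation `D' + x D = 1` satisfied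
by `D(x) = e^{-x²/2} ∫_0^x e^{y²/2} dy`. Since both sides vanish at `0`, this yields
`x D(x) ≤ x g(x)` for every real `x`, i.e. `H(x) ≥ (10 - 12x²) / (x⁴ + 5x² + 10)`, whence
`H ≥ 0` for `x² ≤ 1/2` and `H(x) ≥ -12 / (1 + x²)` in general; also `H ≤ 1`.

The upper bound follows since `H` is bounded. For the lower bound, if `48 a ≤ 1 + w²` or
`w² ≤ 1/2`, then `1 + 2 a H(w) ≥ 1/2`. Otherwise `a > 1/48` and `1/2 < w² < 48 a`, so the second
summand is at least a constant times `e^{-48 a} ≥ e^{-2304 a²}`.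
-/


/-- The function `H(x) = 1 - x e^{-x²/2} ∫_0^x e^{y²/2} dy` arising in the explicit
evaluation of the Lenard--Balescu dispersion function at the Maxwellian. -/
noncomputable def Hfun (x : ℝ) : ℝ :=
  1 - x * Real.exp (-x ^ 2 / 2) * ∫ y in (0:ℝ)..x, Real.exp (y ^ 2 / 2)

/-- The antiderivative in `Hfun` has the sign of its argument. -/
lemma mul_integral_nonneg (x : ℝ) : 0 ≤ x * ∫ y in (0:ℝ)..x, Real.exp (y ^ 2 / 2) := by
  rcases le_total 0 x with h | h
  · exact mul_nonneg h (intervalIntegral.integral_nonneg h fun y _ => (Real.exp_pos _).le)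
  · rw [intervalIntegral.integral_symm]
    exact mul_nonneg_of_nonpos_of_nonpos h
      (neg_nonpos.2 (intervalIntegral.integral_nonneg h fun y _ => (Real.exp_pos _).le))

/-- Comparison of the integral with the supersolution: the difference is monotone and vanishes at `0`,
so it has the sign of `x`, which covers negative `x` as well. -/
lemma mul_integral_le (x : ℝ) :
    x * ∫ y in (0:ℝ)..x, Real.exp (y ^ 2 / 2) ≤
      x * (x * (x ^ 2 + 17) / (x ^ 4 + 5 * x ^ 2 + 10) * Real.exp (x ^ 2 / 2)) := by
  set f : ℝ → ℝ := fun x => x * (x ^ 2 + 17) / (x ^ 4 + 5 * x ^ 2 + 10) * Real.exp (x ^ 2 / 2)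
    - ∫ y in (0:ℝ)..x, Real.exp (y ^ 2 / 2) with hf
  have hcont : Continuous fun y : ℝ => Real.exp (y ^ 2 / 2) := by fun_prop
  have hder : ∀ x : ℝ, HasDerivAt f
      ((((1 * (x ^ 2 + 17) + x * (2 * x)) * (x ^ 4 + 5 * x ^ 2 + 10)
        - x * (x ^ 2 + 17) * (4 * x ^ 3 + 5 * (2 * x))) / (x ^ 4 + 5 * x ^ 2 + 10) ^ 2)
          * Real.exp (x ^ 2 / 2)
        + x * (x ^ 2 + 17) / (x ^ 4 + 5 * x ^ 2 + 10) * (Real.exp (x ^ 2 / 2) * (2 * x / 2))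
        - Real.exp (x ^ 2 / 2)) x := by
    intro x
    have h2 : HasDerivAt (fun x : ℝ => x ^ 2) (2 * x) x := by
      simpa using hasDerivAt_pow 2 x
    have h4 : HasDerivAt (fun x : ℝ => x ^ 4) (4 * x ^ 3) x := by
      simpa using hasDerivAt_pow 4 x
    have hQ : x ^ 4 + 5 * x ^ 2 + 10 ≠ 0 := by positivity
    exact ((((hasDerivAt_id' x).mul (h2.add_const 17)).div
      ((h4.add (h2.const_mul 5)).add_const 10) hQ).mul (h2.div_const 2).exp).sub
      (hcont.integral_hasStrictDerivAt 0 x).hasDerivAt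
  have hmono : Monotone f := by
    refine monotone_of_deriv_nonneg (fun x => (hder x).differentiableAt) fun x => ?_
    rw [(hder x).deriv]
    have hQ : 0 < x ^ 4 + 5 * x ^ 2 + 10 := by positivity
    -- The supersolution inequality `g' + x g - 1 ≥ 0`, with the numerator expanded.
    have key : ((((1 * (x ^ 2 + 17) + x * (2 * x)) * (x ^ 4 + 5 * x ^ 2 + 10)
        - x * (x ^ 2 + 17) * (4 * x ^ 3 + 5 * (2 * x))) / (x ^ 4 + 5 * x ^ 2 + 10) ^ 2)
          * Real.exp (x ^ 2 / 2)
        + x * (x ^ 2 + 17) / (x ^ 4 + 5 * x ^ 2 + 10) * (Real.exp (x ^ 2 / 2) * (2 * x / 2))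
        - Real.exp (x ^ 2 / 2)) = (11 * x ^ 6 + 4 * x ^ 4 + 15 * x ^ 2 + 70)
          / (x ^ 4 + 5 * x ^ 2 + 10) ^ 2 * Real.exp (x ^ 2 / 2) := by
      field_simp
      ring
    rw [key]
    positivity
  have h0 : f 0 = 0 := by simp [hf]
  have hx : 0 ≤ x * f x := by
    rcases le_total 0 x with h | h
    · exact mul_nonneg h (h0 ▸ hmono h)
    · exact mul_nonneg_of_nonpos_of_nonpos h (h0 ▸ hmono h)
  simp only [hf, mul_sub] at hx
  linarith

lemma Hfun_le_one (x : ℝ) : Hfun x ≤ 1 := by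
  have := mul_nonneg (mul_integral_nonneg x) (Real.exp_pos (-x ^ 2 / 2)).le
  unfold Hfun
  linarith

lemma le_Hfun (x : ℝ) : (10 - 12 * x ^ 2) / (x ^ 4 + 5 * x ^ 2 + 10) ≤ Hfun x := by
  have h := mul_le_mul_of_nonneg_right (mul_integral_le x) (Real.exp_pos (-x ^ 2 / 2)).le
  have he : Real.exp (x ^ 2 / 2) * Real.exp (-x ^ 2 / 2) = 1 := by
    rw [← Real.exp_add, ← Real.exp_zero]
    ring_nf
  have hQ : 0 < x ^ 4 + 5 * x ^ 2 + 10 := by positivity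
  have h2 : x * (x * (x ^ 2 + 17) / (x ^ 4 + 5 * x ^ 2 + 10) * Real.exp (x ^ 2 / 2))
      * Real.exp (-x ^ 2 / 2) = 1 - (10 - 12 * x ^ 2) / (x ^ 4 + 5 * x ^ 2 + 10) := by
    rw [show x * (x * (x ^ 2 + 17) / (x ^ 4 + 5 * x ^ 2 + 10) * Real.exp (x ^ 2 / 2))
      * Real.exp (-x ^ 2 / 2) = x * (x * (x ^ 2 + 17) / (x ^ 4 + 5 * x ^ 2 + 10))
        * (Real.exp (x ^ 2 / 2) * Real.exp (-x ^ 2 / 2)) by ring, he]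
    field_simp
    ring
  rw [h2] at h
  unfold Hfun
  linarith

lemma Hfun_nonneg {x : ℝ} (hx : x ^ 2 ≤ 1 / 2) : 0 ≤ Hfun x :=
  le_trans (div_nonneg (by linarith) (by positivity)) (le_Hfun x)

lemma neg_div_le_Hfun (x : ℝ) : -(12 / (1 + x ^ 2)) ≤ Hfun x := by
  refine le_trans ?_ (le_Hfun x)
  rw [← neg_div, div_le_div_iff₀ (by positivity) (by positivity)]
  nlinarith [sq_nonneg x, sq_nonneg (x ^ 2)]

/-- **Uniform bounds for the squared modulus of the dispersion function at Maxwellian.**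
There is `C ≥ 1` such that for all `a ≥ 0` and `w ∈ ℝ`,
`(1/C) e^{-C a²} ≤ (1 + 2a H(w))² + 2π a² w² e^{-w²} ≤ C (1 + a²)`. -/
theorem dispersion_modulus_bounds :
    ∃ C : ℝ, 1 ≤ C ∧ ∀ a w : ℝ, 0 ≤ a →
      (1 / C) * Real.exp (-C * a ^ 2)
          ≤ (1 + 2 * a * Hfun w) ^ 2 + 2 * Real.pi * a ^ 2 * w ^ 2 * Real.exp (-w ^ 2) ∧
        (1 + 2 * a * Hfun w) ^ 2 + 2 * Real.pi * a ^ 2 * w ^ 2 * Real.exp (-w ^ 2)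
          ≤ C * (1 + a ^ 2) := by
  refine ⟨2304, by norm_num, fun a w ha => ⟨?_, ?_⟩⟩
  · have hsec : 0 ≤ 2 * Real.pi * a ^ 2 * w ^ 2 * Real.exp (-w ^ 2) := by positivity
    have hsq := sq_nonneg (1 + 2 * a * Hfun w)
    by_cases hH : 1 / 2 ≤ 1 + 2 * a * Hfun w
    · have he : Real.exp (-2304 * a ^ 2) ≤ 1 := Real.exp_le_one_iff.2 (by nlinarith [sq_nonneg a])
      nlinarith
    · have hw : 1 / 2 < w ^ 2 := by
        by_contra! h
        nlinarith [mul_nonneg ha (Hfun_nonneg h)]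
      have haw : 1 + w ^ 2 < 48 * a := by
        by_contra! h
        have h1 := mul_le_mul_of_nonneg_left (neg_div_le_Hfun w) ha
        have h2 : a * (12 / (1 + w ^ 2)) ≤ 1 / 4 := by
          rw [← mul_div_assoc, div_le_iff₀ (by positivity)]
          linarith
        linarith
      have ha' : 1 / 48 ≤ a := by linarith
      have he : Real.exp (-2304 * a ^ 2) ≤ Real.exp (-w ^ 2) :=
        Real.exp_le_exp.2 (by nlinarith)
      have hc : (1 / 2304 : ℝ) ≤ 2 * Real.pi * a ^ 2 * w ^ 2 := by
        have h1 : (1 / 48 : ℝ) ^ 2 ≤ a ^ 2 := by gcongr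
        calc (1 / 2304 : ℝ) ≤ 2 * 3 * (1 / 48) ^ 2 * (1 / 2) := by norm_num
          _ ≤ 2 * Real.pi * a ^ 2 * w ^ 2 := by
            gcongr
            exact Real.pi_gt_three.le
      have := mul_le_mul hc he (Real.exp_pos _).le (by positivity)
      linarith
  · have h1 : -12 ≤ Hfun w := by
      refine le_trans (neg_le_neg ?_) (neg_div_le_Hfun w)
      exact div_le_self (by norm_num) (by nlinarith [sq_nonneg w])
    have hH2 : Hfun w ^ 2 ≤ 144 := by nlinarith [Hfun_le_one w]
    have hwe : w ^ 2 * Real.exp (-w ^ 2) ≤ 1 := by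
      rw [Real.exp_neg, ← div_eq_mul_inv, div_le_one (Real.exp_pos _)]
      linarith [Real.add_one_le_exp (w ^ 2)]
    have hP : Real.pi * (w ^ 2 * Real.exp (-w ^ 2)) ≤ 4 := by
      nlinarith [Real.pi_le_four, Real.pi_pos]
    have h3 := mul_le_mul_of_nonneg_left hP (sq_nonneg a)
    have h4 := mul_le_mul_of_nonneg_left hH2 (sq_nonneg a)
    nlinarith [sq_nonneg (1 - 2 * a * Hfun w), sq_nonneg a]
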